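/- Let l ≥ 1 and m ≥ 0 be integers. In the field K = 𝕜(x₁,…,x_l) of rational functions over a field 𝕜 of characteristic zero, the following identity holds: x_l^{m} + ∑_{i=1}^{l−1} (Dᵢ⁺ ∘ D_{i+1}⁺ ∘ ⋯ ∘ D_{l−1}⁺)(x_l^{m}) = ∑_{(q₁,…,q_l)} ∏_{j : qⱼ > 0} xⱼ^{qⱼ−1}, where the right-hand sum is over all tuples (q₁,…,q_l) of nonnegative integers with q₁ + ⋯ + q_l = m + 1, and the product is over those indices j with qⱼ > 0 (an empty product being 1). In particular, both sides lie in the polynomial subring 𝕜[x₁,…,x_l]. -/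

import Mathlib

noncomputable section

open MvPolynomial

/-- The `i`-th variable `xᵢ`, regarded as an element of the field `K` of rational
functions (the fraction field of `MvPolynomial (Fin l) 𝕜`). -/
def ratVar (𝕜 : Type*) [Field 𝕜] (n : ℕ) (K : Type*) [Field K]
    [Algebra (MvPolynomial (Fin n) 𝕜) K] (i : Fin n) : K :=
  algebraMap (MvPolynomial (Fin n) 𝕜) K (X i)

/-- The `𝕜`-linear operator `f ↦ s f + (f - s f) * c⁻¹` (that is, `s + ∂` where
`∂ f = (f - s f)/c`). -/
def demazurePlusAux (𝕜 : Type*) [Field 𝕜] (K : Type*) [Field K] [Algebra 𝕜 K]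
    (s : K ≃ₐ[𝕜] K) (c : K) : Module.End 𝕜 K :=
  s.toLinearMap + (LinearMap.mulRight 𝕜 c⁻¹) ∘ₗ ((LinearMap.id : K →ₗ[𝕜] K) - s.toLinearMap)

/-- The operator `Dᵢ⁺ = sᵢ + ∂ᵢ` (0-indexed variables). -/
def DPlus (𝕜 : Type*) [Field 𝕜] {n : ℕ} (K : Type*) [Field K] [Algebra 𝕜 K]
    [Algebra (MvPolynomial (Fin n) 𝕜) K]
    (s : Equiv.Perm (Fin n) → (K ≃ₐ[𝕜] K)) (i : ℕ) (hi : i + 1 < n) : Module.End 𝕜 K :=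
  demazurePlusAux 𝕜 K (s (Equiv.swap ⟨i, Nat.lt_of_succ_lt hi⟩ ⟨i + 1, hi⟩))
    (ratVar 𝕜 n K ⟨i + 1, hi⟩ - ratVar 𝕜 n K ⟨i, Nat.lt_of_succ_lt hi⟩)

/-- The operator `Dᵢ⁺`, extended by the identity for indices `i` out of range (it is
only ever used below for in-range indices). -/
def DPlusTotal (𝕜 : Type*) [Field 𝕜] {n : ℕ} (K : Type*) [Field K] [Algebra 𝕜 K]
    [Algebra (MvPolynomial (Fin n) 𝕜) K]
    (s : Equiv.Perm (Fin n) → (K ≃ₐ[𝕜] K)) (i : ℕ) : Module.End 𝕜 K :=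
  if hi : i + 1 < n then DPlus 𝕜 K s i hi else 1

open Finset

/-- The geometric series `∑ aⁿ tⁿ`. -/
def geomSeries {K : Type*} [Field K] (a : K) : PowerSeries K :=
  PowerSeries.mk fun n => a ^ n

/-- The variables indexed by `ℕ`, extended by zero. -/
def ratVarTotal (𝕜 : Type*) [Field 𝕜] (n : ℕ) (K : Type*) [Field K]
    [Algebra (MvPolynomial (Fin n) 𝕜) K] (j : ℕ) : K :=
  if h : j < n then ratVar 𝕜 n K ⟨j, h⟩ else 0

theorem ratVarTotal_of_lt (𝕜 : Type*) [Field 𝕜] {n : ℕ} (K : Type*) [Field K]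
    [Algebra (MvPolynomial (Fin n) 𝕜) K] {j : ℕ} (h : j < n) :
    ratVarTotal 𝕜 n K j = ratVar 𝕜 n K ⟨j, h⟩ :=
  dif_pos h

section GeomSeries

variable {K : Type*} [Field K]

theorem coeff_geomSeries (a : K) (n : ℕ) : PowerSeries.coeff n (geomSeries a) = a ^ n :=
  PowerSeries.coeff_mk _ _

theorem map_geomSeries (φ : K →+* K) (a : K) :
    PowerSeries.map φ (geomSeries a) = geomSeries (φ a) := by
  ext n
  simp [coeff_geomSeries]

theorem geomSeries_eq (a : K) :
    geomSeries a = 1 + PowerSeries.C a * PowerSeries.X * geomSeries a := by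
  ext n
  rw [mul_assoc]
  cases n with
  | zero => simp [coeff_geomSeries]
  | succ n =>
    simp [coeff_geomSeries, PowerSeries.coeff_succ_X_mul, PowerSeries.coeff_one, pow_succ']

theorem geomSeries_sub (a b : K) :
    geomSeries b - geomSeries a =
      PowerSeries.C (b - a) * (PowerSeries.X * geomSeries a * geomSeries b) := by
  have ha := geomSeries_eq a
  have hb := geomSeries_eq b
  rw [map_sub]
  linear_combination geomSeries a * hb - geomSeries b * ha

theorem coeff_one_add_X_mul_geomSeries (a : K) (n : ℕ) :
    PowerSeries.coeff n (1 + PowerSeries.X * geomSeries a) =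
      if 0 < n then a ^ (n - 1) else 1 := by
  cases n with
  | zero => simp
  | succ n => simp [PowerSeries.coeff_succ_X_mul, coeff_geomSeries, PowerSeries.coeff_one]

/-- The operator `s + ∂` applied to the coefficients of `A / (1 - b t)`, where `A` is fixed
by `s` and `s b = a`. -/
theorem demazurePlusAux_coeff {𝕜 : Type*} [Field 𝕜] [Algebra 𝕜 K] (s : K ≃ₐ[𝕜] K) {a b : K}
    (hab : a ≠ b) (hs : s b = a) {A : PowerSeries K}
    (hA : PowerSeries.map (s : K →+* K) A = A) (n : ℕ) :
    demazurePlusAux 𝕜 K s (b - a) (PowerSeries.coeff n (geomSeries b * A)) =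
      PowerSeries.coeff n
        (geomSeries a * ((1 + PowerSeries.X * geomSeries b) * A)) := by
  have h1 : s (PowerSeries.coeff n (geomSeries b * A)) =
      PowerSeries.coeff n (geomSeries a * A) := by
    have := PowerSeries.coeff_map (s : K →+* K) n (geomSeries b * A)
    rw [map_mul, map_geomSeries, hA] at this
    simpa [hs] using this.symm
  have h2 : PowerSeries.coeff n (geomSeries b * A) - PowerSeries.coeff n (geomSeries a * A) =
      (b - a) * PowerSeries.coeff n (PowerSeries.X * geomSeries a * geomSeries b * A) := by
    rw [← map_sub, ← sub_mul, geomSeries_sub, mul_assoc, PowerSeries.coeff_C_mul]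
  have h3 : geomSeries a * ((1 + PowerSeries.X * geomSeries b) * A) =
      geomSeries a * A + PowerSeries.X * geomSeries a * geomSeries b * A := by ring
  have hne : b - a ≠ 0 := sub_ne_zero.mpr hab.symm
  simp only [demazurePlusAux, LinearMap.add_apply, LinearMap.comp_apply, LinearMap.sub_apply,
    LinearMap.id_apply, AlgEquiv.toLinearMap_apply, LinearMap.mulRight_apply]
  rw [h1, h2, h3, map_add]
  field_simp

end GeomSeries

theorem mul_sum_mul_prod_Ico_add_prod_Ico {R : Type*} [CommRing R] (t : R) (g : ℕ → R) {k l : ℕ}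
    (hk : k ≤ l) :
    t * ∑ i ∈ range k, g i * ∏ j ∈ Ico (i + 1) l, (1 + t * g j) +
      ∏ j ∈ Ico k l, (1 + t * g j) = ∏ j ∈ range l, (1 + t * g j) := by
  induction k with
  | zero => simp
  | succ k ih =>
    rw [← ih (by omega), sum_range_succ, prod_eq_prod_Ico_succ_bot (show k < l by omega)]
    ring

theorem ratVar_injective (𝕜 : Type*) [Field 𝕜] (n : ℕ) (K : Type*) [Field K]
    [Algebra (MvPolynomial (Fin n) 𝕜) K] [IsFractionRing (MvPolynomial (Fin n) 𝕜) K] :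
    Function.Injective (ratVar 𝕜 n K) :=
  (IsFractionRing.injective (MvPolynomial (Fin n) 𝕜) K).comp (MvPolynomial.X_injective)

/-- The composite `Dᵢ⁺ ∘ ⋯ ∘ D_{l-1}⁺` applied to a power of the last variable is a coefficient
of `(1 - xᵢ t)⁻¹ ∏_{j > i} (1 + t (1 - xⱼ t)⁻¹)`. -/
theorem DPlusTotal_chain_pow {𝕜 : Type*} [Field 𝕜] {l : ℕ} (m : ℕ)
    {K : Type*} [Field K] [Algebra 𝕜 K] [Algebra (MvPolynomial (Fin l) 𝕜) K]
    [IsFractionRing (MvPolynomial (Fin l) 𝕜) K]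
    (s : Equiv.Perm (Fin l) → (K ≃ₐ[𝕜] K))
    (hs : ∀ (σ : Equiv.Perm (Fin l)) (i : Fin l), s σ (ratVar 𝕜 l K i) = ratVar 𝕜 l K (σ i))
    (n i : ℕ) (hi : i + n + 1 = l) :
    ((List.range n).map fun t => DPlusTotal 𝕜 K s (i + t)).prod
        (ratVarTotal 𝕜 l K (i + n) ^ m) =
      PowerSeries.coeff m (geomSeries (ratVarTotal 𝕜 l K i) *
        ∏ j ∈ Ico (i + 1) l, (1 + PowerSeries.X * geomSeries (ratVarTotal 𝕜 l K j))) := by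
  induction n generalizing i with
  | zero =>
    subst hi
    simp [coeff_geomSeries]
  | succ n ih =>
    have hi1 : i + 1 < l := by omega
    have hi0 : i < l := by omega
    have hchain := ih (i + 1) (by omega)
    rw [show i + 1 + n = i + (n + 1) by ring] at hchain
    rw [List.range_succ_eq_map, List.map_cons, List.prod_cons, List.map_map]
    have hfun : ((fun t => DPlusTotal 𝕜 K s (i + t)) ∘ Nat.succ) =
        fun t => DPlusTotal 𝕜 K s (i + 1 + t) := by
      funext t
      simp only [Function.comp_apply]
      congr 1
      omega
    rw [hfun, Module.End.mul_apply, hchain, add_zero, DPlusTotal, dif_pos hi1, DPlus,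
      ← ratVarTotal_of_lt 𝕜 K hi1, ← ratVarTotal_of_lt 𝕜 K hi0,
      prod_eq_prod_Ico_succ_bot hi1]
    apply demazurePlusAux_coeff
    · rw [ratVarTotal_of_lt 𝕜 K hi1, ratVarTotal_of_lt 𝕜 K hi0]
      intro h
      have := ratVar_injective 𝕜 l K h
      simp at this
    · rw [ratVarTotal_of_lt 𝕜 K hi1, ratVarTotal_of_lt 𝕜 K hi0, hs, Equiv.swap_apply_right]
    · rw [map_prod]
      refine prod_congr rfl fun j hj => ?_
      rw [mem_Ico] at hj
      rw [map_add, map_one, map_mul, PowerSeries.map_X, map_geomSeries,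
        ratVarTotal_of_lt 𝕜 K hj.2]
      congr 3
      refine (hs _ _).trans ?_
      rw [Equiv.swap_apply_of_ne_of_ne] <;> simp only [ne_eq, Fin.mk.injEq] <;> omega

theorem coeff_prod_one_add_X_mul_geomSeries {K : Type*} [Field K] {l : ℕ} (x : Fin l → K)
    (d : ℕ) :
    PowerSeries.coeff d (∏ j, (1 + PowerSeries.X * geomSeries (x j))) =
      ∑ q ∈ univ.filter (fun q : Fin l → Fin (d + 1) => (∑ j, (q j : ℕ)) = d),
        ∏ j ∈ univ.filter fun j : Fin l => 0 < (q j : ℕ), x j ^ ((q j : ℕ) - 1) := by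
  rw [PowerSeries.coeff_prod]
  symm
  refine sum_bij (fun q _ => Finsupp.equivFunOnFinite.symm fun j => (q j : ℕ)) ?_ ?_ ?_ ?_
  · intro q hq
    simpa [mem_finsuppAntidiag] using hq
  · intro p _ q _ h
    funext j
    exact Fin.ext (congrFun (Finsupp.equivFunOnFinite.symm.injective h) j)
  · intro f hf
    have hf' : ∑ j, f j = d := (mem_finsuppAntidiag.mp hf).1
    have hle (j : Fin l) : f j < d + 1 := by
      have := single_le_sum (f := f) (fun _ _ => Nat.zero_le _) (mem_univ j)
      omega
    refine ⟨fun j => ⟨f j, hle j⟩, by simpa using hf', ?_⟩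
    ext j
    simp
  · intro q _
    rw [prod_filter]
    refine prod_congr rfl fun j _ => ?_
    rw [coeff_one_add_X_mul_geomSeries]
    simp

/-- For `l ≥ 1`, `m ≥ 0`, in `K = 𝕜(x₁,…,x_l)`:
`x_l^{m} + ∑_{i=1}^{l−1} (Dᵢ⁺ ∘ ⋯ ∘ D_{l−1}⁺)(x_l^{m})
  = ∑_{(q₁,…,q_l)} ∏_{j : qⱼ>0} xⱼ^{qⱼ−1}`,
the sum being over tuples of nonnegative integers with `q₁ + ⋯ + q_l = m + 1` (every
such tuple has all entries `≤ m + 1`, so they are faithfully enumerated by the filtered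
finite set below).  In particular both sides lie in the polynomial subring
`𝕜[x₁,…,x_l]`, i.e. in the image of the polynomial ring in `K`.  Everything here is
`0`-indexed, and the composite `Dᵢ⁺ ∘ ⋯ ∘ D_{l−1}⁺` is the `List.prod` (= composition)
of the indicated operators. -/
theorem DPlus_chain_sum_on_power
    (𝕜 : Type*) [Field 𝕜] [CharZero 𝕜] (l m : ℕ) (hl : 1 ≤ l)
    (K : Type*) [Field K] [Algebra 𝕜 K] [Algebra (MvPolynomial (Fin l) 𝕜) K]
    [IsScalarTower 𝕜 (MvPolynomial (Fin l) 𝕜) K]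
    [IsFractionRing (MvPolynomial (Fin l) 𝕜) K]
    (s : Equiv.Perm (Fin l) → (K ≃ₐ[𝕜] K))
    (hs : ∀ (σ : Equiv.Perm (Fin l)) (i : Fin l), s σ (ratVar 𝕜 l K i) = ratVar 𝕜 l K (σ i)) :
    (ratVar 𝕜 l K ⟨l - 1, by omega⟩ ^ m +
        ∑ i ∈ Finset.range (l - 1),
          (((List.range (l - 1 - i)).map fun t => DPlusTotal 𝕜 K s (i + t)).prod)
            (ratVar 𝕜 l K ⟨l - 1, by omega⟩ ^ m) =
      ∑ q ∈ Finset.univ.filter (fun q : Fin l → Fin (m + 2) => (∑ j, (q j : ℕ)) = m + 1),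
        ∏ j ∈ Finset.univ.filter fun j : Fin l => 0 < (q j : ℕ),
          ratVar 𝕜 l K j ^ ((q j : ℕ) - 1)) ∧
    (ratVar 𝕜 l K ⟨l - 1, by omega⟩ ^ m +
        ∑ i ∈ Finset.range (l - 1),
          (((List.range (l - 1 - i)).map fun t => DPlusTotal 𝕜 K s (i + t)).prod)
            (ratVar 𝕜 l K ⟨l - 1, by omega⟩ ^ m)) ∈
      Set.range (algebraMap (MvPolynomial (Fin l) 𝕜) K) := by
  have heq : ratVar 𝕜 l K ⟨l - 1, by omega⟩ ^ m +
        ∑ i ∈ Finset.range (l - 1),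
          (((List.range (l - 1 - i)).map fun t => DPlusTotal 𝕜 K s (i + t)).prod)
            (ratVar 𝕜 l K ⟨l - 1, by omega⟩ ^ m) =
      ∑ q ∈ Finset.univ.filter (fun q : Fin l → Fin (m + 2) => (∑ j, (q j : ℕ)) = m + 1),
        ∏ j ∈ Finset.univ.filter fun j : Fin l => 0 < (q j : ℕ),
          ratVar 𝕜 l K j ^ ((q j : ℕ) - 1) := by
    rw [← coeff_prod_one_add_X_mul_geomSeries, ← ratVarTotal_of_lt 𝕜 K]
    have hprod : ∏ j : Fin l, (1 + PowerSeries.X * geomSeries (ratVar 𝕜 l K j)) =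
        ∏ j ∈ range l, (1 + PowerSeries.X * geomSeries (ratVarTotal 𝕜 l K j)) := by
      rw [← Fin.prod_univ_eq_prod_range
        (fun j => 1 + PowerSeries.X * geomSeries (ratVarTotal 𝕜 l K j))]
      exact prod_congr rfl fun j _ => by rw [ratVarTotal_of_lt 𝕜 K j.2]
    rw [hprod, ← mul_sum_mul_prod_Ico_add_prod_Ico PowerSeries.X
      (fun j => geomSeries (ratVarTotal 𝕜 l K j)) le_rfl, Ico_self, prod_empty, map_add,
      PowerSeries.coeff_succ_X_mul, PowerSeries.coeff_one, if_neg m.succ_ne_zero, add_zero,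
      map_sum]
    have hterm : ∀ i ∈ range l,
        ((List.range (l - 1 - i)).map fun t => DPlusTotal 𝕜 K s (i + t)).prod
          (ratVarTotal 𝕜 l K (l - 1) ^ m) =
        PowerSeries.coeff m (geomSeries (ratVarTotal 𝕜 l K i) *
          ∏ j ∈ Ico (i + 1) l, (1 + PowerSeries.X * geomSeries (ratVarTotal 𝕜 l K j))) := by
      intro i hi
      have hil := mem_range.mp hi
      have h := DPlusTotal_chain_pow m s hs (l - 1 - i) i (by omega)
      rwa [show i + (l - 1 - i) = l - 1 by omega] at h
    rw [← sum_congr rfl hterm]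
    obtain ⟨k, rfl⟩ : ∃ k, l = k + 1 := ⟨l - 1, by omega⟩
    rw [Nat.add_sub_cancel, sum_range_succ _ k, add_comm]
    simp
  refine ⟨heq, ?_⟩
  rw [heq, ← RingHom.coe_range]
  exact sum_mem fun q _ => prod_mem fun j _ => pow_mem (RingHom.mem_range_self _ _) _
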